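/- arXiv:1905.04785 — 3 statements merged into one kernel-verified Lean document; each statement's English description precedes it below -/
import Mathlib

section
/- Let n ≥ 3 be an integer. Define an equivalence relation ≈_E on the set Y_n of bijections x : ZMod n → ZMod n by declaring x ≈_E y if and only if there exist m, k : ZMod n and a sign δ ∈ {1, -1} ⊆ ZMod n such that for all i : ZMod n, y i = x (δ * i + m) + k. Then the number of equivalence classes of Y_n under ≈_E equals (1/(2n²)) * ( Σ_{d ∣ n} φ(n/d)² * (n/d)^d * d! + (if n is even then (n/2) * n!! else 0) ), where φ is Euler's totient function. -/
open Nat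

/-!
Regarding bijections as permutations, the equivalence classes are the double cosets in
`Equiv.Perm (ZMod n)` of the group of translations (acting on labels) and the dihedral group (acting
on indices). By Burnside's lemma, `2 * n ^ 2` times their number is the number of triples
`(k, g, s)` with `s * g = k * s`, where `k` is a translation, `g` is dihedral and `s` is any
permutation; a conjugate pair `(g, k)` contributes the order of the centralizer of `k`, the other
pairs nothing.

Translations are semiregular. Semiregular permutations have cycles of equal length, so they are
conjugate exactly when they have the same order, and the centralizer of one of order `e` has order
`e ^ (n / e) * (n / e)!`. Hence the rotations `g` contribute the sum over the divisors of `n`. A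
reflection `g` can only be conjugate to a translation if it has no fixed points, which happens
for `n / 2` of them when `n` is even and for none when `n` is odd. Each of these is conjugate to the
translation of order two and to no other, and that translation has centralizer of order `n‼`.
-/

section DoubleCoset

variable {G H K : Type*} [Group G] [Group H] [Group K]

theorem nat_card_semiconjBy (a b : G) [Decidable (IsConj a b)] :
    Nat.card {s : G // SemiconjBy s a b} =
      if IsConj a b then Nat.card (Subgroup.centralizer {b}) else 0 := by
  split_ifs with h
  · obtain ⟨t, ht : SemiconjBy (t : G) a b⟩ := h
    refine Nat.card_congr ((Equiv.mulRight (t : G)⁻¹).subtypeEquiv fun s => ?_)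
    rw [Equiv.coe_mulRight, Subgroup.mem_centralizer_singleton_iff]
    exact ⟨fun hs => hs.mul_left ht.inv_symm_left,
      fun hs => by simpa using SemiconjBy.mul_left (show SemiconjBy (s * (t : G)⁻¹) b b from hs) ht⟩
  · have : IsEmpty {s : G // SemiconjBy s a b} := ⟨fun s => h ⟨toUnits s.1, s.2⟩⟩
    exact Nat.card_of_isEmpty

/-- The action of `H × K` on `G` by `(h, k) • s = f h * s * (g k)⁻¹`, whose orbits are the double
cosets of `f.range` and `g.range`. -/
abbrev twoSidedMulAction (f : H →* G) (g : K →* G) : MulAction (H × K) G where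
  smul p s := f p.1 * s * (g p.2)⁻¹
  one_smul s := show f 1 * s * (g 1)⁻¹ = s by simp
  mul_smul p q s := show f (p.1 * q.1) * s * (g (p.2 * q.2))⁻¹ =
    f p.1 * (f q.1 * s * (g q.2)⁻¹) * (g p.2)⁻¹ by simp [mul_assoc]

theorem orbitRel_twoSidedMulAction (f : H →* G) (g : K →* G) :
    let := twoSidedMulAction f g
    MulAction.orbitRel (H × K) G = DoubleCoset.setoid (f.range : Set G) g.range := by
  let := twoSidedMulAction f g
  ext s t
  rw [DoubleCoset.rel_iff, Setoid.comm']
  constructor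
  · rintro ⟨⟨h, k⟩, rfl⟩
    exact ⟨f h, ⟨h, rfl⟩, (g k)⁻¹, g.range.inv_mem ⟨k, rfl⟩, rfl⟩
  · rintro ⟨_, ⟨h, rfl⟩, _, ⟨k, rfl⟩, rfl⟩
    refine ⟨(h, k⁻¹), show f h * s * (g k⁻¹)⁻¹ = f h * s * g k by simp⟩

theorem nat_card_doubleCoset_mul [Finite G] [Fintype H] [Fintype K]
    (f : H →* G) (g : K →* G) :
    Nat.card (DoubleCoset.Quotient (f.range : Set G) g.range) *
        (Fintype.card H * Fintype.card K) =
      ∑ h, ∑ k, Nat.card {s : G // SemiconjBy s (g k) (f h)} := by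
  classical
  let := twoSidedMulAction f g
  have := Fintype.ofFinite G
  have burnside := MulAction.sum_card_fixedBy_eq_card_orbits_mul_card_group (H × K) G
  rw [← Nat.card_eq_fintype_card (α := Quotient _), orbitRel_twoSidedMulAction,
    Fintype.card_prod] at burnside
  refine burnside.symm.trans ((Fintype.sum_prod_type _).trans ?_)
  refine Finset.sum_congr rfl fun h _ => Finset.sum_congr rfl fun k _ => ?_
  rw [← Nat.card_eq_fintype_card]
  exact Nat.card_congr (Equiv.subtypeEquivRight fun s => mul_inv_eq_iff_eq_mul.trans eq_comm)

end DoubleCoset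

section Semiregular

variable {α : Type*}

/-- A permutation is semiregular if the cyclic group it generates acts freely: no power of it other
than the identity has a fixed point. Every negative power fixes the same points as a positive one,
so natural exponents suffice. -/
def IsSemiregular (τ : Equiv.Perm α) : Prop :=
  ∀ (j : ℕ) (x : α), (τ ^ j) x = x → τ ^ j = 1

namespace IsSemiregular

variable {τ ρ : Equiv.Perm α}

theorem of_isConj (hρ : IsSemiregular ρ) (h : IsConj τ ρ) : IsSemiregular τ := by
  obtain ⟨t, ht⟩ := isConj_iff.1 h.symm
  intro j x hx
  subst ht
  rw [conj_pow] at hx ⊢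
  rw [hρ j (t⁻¹ x) (Equiv.Perm.eq_inv_iff_eq.2 hx), mul_one, mul_inv_cancel]

theorem eq_orderOf_of_mem_cycleType [Fintype α] [DecidableEq α] (hτ : IsSemiregular τ) {b : ℕ}
    (hb : b ∈ τ.cycleType) : b = orderOf τ := by
  refine Nat.dvd_antisymm (Equiv.Perm.dvd_of_mem_cycleType hb) ?_
  obtain ⟨c, σ, rfl, hdisj, hc, rfl⟩ := Equiv.Perm.mem_cycleType_iff.1 hb
  obtain ⟨x, hx⟩ := hc.nonempty_support
  have hσx : σ x = x := (hdisj x).resolve_left (Equiv.Perm.mem_support.1 hx)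
  refine orderOf_dvd_of_pow_eq_one (hτ _ x ?_)
  rw [hdisj.commute.mul_pow, Equiv.Perm.mul_apply,
    Equiv.Perm.pow_apply_eq_self_of_apply_eq_self hσx, ← hc.orderOf, pow_orderOf_eq_one,
    Equiv.Perm.one_apply]

theorem support_eq_univ [Fintype α] [DecidableEq α] (hτ : IsSemiregular τ) (h1 : τ ≠ 1) :
    τ.support = Finset.univ := by
  refine Finset.eq_univ_of_forall fun x => Equiv.Perm.mem_support.2 fun hx => h1 ?_
  simpa using hτ 1 x (by simpa using hx)

theorem cycleType_eq_replicate [Fintype α] [DecidableEq α] (hτ : IsSemiregular τ) (h1 : τ ≠ 1) :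
    τ.cycleType = Multiset.replicate (Fintype.card α / orderOf τ) (orderOf τ) := by
  have hrep := Multiset.eq_replicate_card.2 fun _ => hτ.eq_orderOf_of_mem_cycleType
  have hsum := τ.sum_cycleType
  rw [hτ.support_eq_univ h1, Finset.card_univ, hrep, Multiset.sum_replicate,
    smul_eq_mul] at hsum
  rwa [← hsum, Nat.mul_div_cancel _ (orderOf_pos τ)]

theorem orderOf_dvd_card [Fintype α] (hτ : IsSemiregular τ) : orderOf τ ∣ Fintype.card α := by
  classical
  rcases eq_or_ne τ 1 with rfl | h1
  · simp
  · rw [← Finset.card_univ, ← hτ.support_eq_univ h1, ← τ.sum_cycleType,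
      hτ.cycleType_eq_replicate h1, Multiset.sum_replicate]
    exact dvd_mul_left _ _

theorem nat_card_centralizer [Fintype α] (hτ : IsSemiregular τ) :
    Nat.card (Subgroup.centralizer {τ}) =
      orderOf τ ^ (Fintype.card α / orderOf τ) * (Fintype.card α / orderOf τ)! := by
  classical
  rw [Equiv.Perm.nat_card_centralizer]
  rcases eq_or_ne τ 1 with rfl | h1
  · simp
  · have hcycle := hτ.cycleType_eq_replicate h1
    have hquot : Fintype.card α / orderOf τ ≠ 0 := fun h0 =>
      h1 (Equiv.Perm.cycleType_eq_zero.1 (by rw [hcycle, h0, Multiset.replicate_zero]))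
    simp [hcycle, Multiset.toFinset_replicate, hquot, Nat.div_mul_cancel hτ.orderOf_dvd_card]

theorem isConj_iff_orderOf_eq [Finite α] (hτ : IsSemiregular τ) (hρ : IsSemiregular ρ) :
    IsConj τ ρ ↔ orderOf τ = orderOf ρ := by
  classical
  have := Fintype.ofFinite α
  rw [Equiv.Perm.isConj_iff_cycleType_eq]
  refine ⟨fun h => by rw [← Equiv.Perm.lcm_cycleType, h, Equiv.Perm.lcm_cycleType], fun h => ?_⟩
  rcases eq_or_ne τ 1 with rfl | h1
  · rw [orderOf_one, eq_comm, orderOf_eq_one_iff] at h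
    rw [h]
  · have h1' : ρ ≠ 1 := by rwa [← orderOf_eq_one_iff.ne, ← h, orderOf_eq_one_iff.ne]
    rw [hτ.cycleType_eq_replicate h1, hρ.cycleType_eq_replicate h1', h]

theorem isConj_iff [Finite α] (hρ : IsSemiregular ρ) :
    IsConj τ ρ ↔ IsSemiregular τ ∧ orderOf τ = orderOf ρ :=
  ⟨fun h => ⟨hρ.of_isConj h, ((hρ.of_isConj h).isConj_iff_orderOf_eq hρ).1 h⟩,
    fun h => (h.1.isConj_iff_orderOf_eq hρ).2 h.2⟩

end IsSemiregular

theorem isSemiregular_iff_of_sq_eq_one {τ : Equiv.Perm α} (h1 : τ ≠ 1) (h2 : τ ^ 2 = 1) :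
    IsSemiregular τ ↔ ∀ x, τ x ≠ x := by
  refine ⟨fun hτ x hx => h1 (by simpa using hτ 1 x (by simpa using hx)), fun hfix j x hx => ?_⟩
  obtain ⟨k, rfl | rfl⟩ := Nat.even_or_odd' j
  · rw [pow_mul, h2, one_pow]
  · rw [pow_succ, pow_mul, h2, one_pow, one_mul] at hx
    exact absurd hx (hfix x)

end Semiregular

section Translation

variable {A : Type*}

theorem isSemiregular_addLeft [AddGroup A] (a : A) : IsSemiregular (Equiv.addLeft a) := by
  intro j x h
  rw [Equiv.nsmul_addLeft, Equiv.coe_addLeft, add_eq_right] at h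
  rw [Equiv.nsmul_addLeft, h, Equiv.addLeft_zero]

theorem orderOf_addLeft [AddGroup A] (a : A) : orderOf (Equiv.addLeft a) = addOrderOf a := by
  rw [← orderOf_ofAdd_eq_addOrderOf, orderOf_eq_orderOf_iff]
  intro j
  rw [Equiv.nsmul_addLeft, ← ofAdd_nsmul, ofAdd_eq_one]
  exact ⟨fun h => by simpa using Equiv.congr_fun h 0, fun h => by rw [h, Equiv.addLeft_zero]⟩

theorem nat_card_centralizer_addLeft [AddGroup A] [Fintype A] (a : A) :
    Nat.card (Subgroup.centralizer {Equiv.addLeft a}) =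
      addOrderOf a ^ (Fintype.card A / addOrderOf a) * (Fintype.card A / addOrderOf a)! := by
  rw [(isSemiregular_addLeft a).nat_card_centralizer, orderOf_addLeft]

theorem isConj_addLeft_iff [AddGroup A] [Finite A] {a b : A} :
    IsConj (Equiv.addLeft a) (Equiv.addLeft b) ↔ addOrderOf a = addOrderOf b := by
  rw [(isSemiregular_addLeft a).isConj_iff_orderOf_eq (isSemiregular_addLeft b), orderOf_addLeft,
    orderOf_addLeft]

variable [AddCommGroup A]

variable (A) in
/-- The regular representation of `A` on itself by translations. -/
def translationHom : Multiplicative A →* Equiv.Perm A :=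
  MulAction.toPermHom (Multiplicative A) A

theorem translationHom_ofAdd (a : A) : translationHom A (.ofAdd a) = Equiv.addLeft a := rfl

theorem subLeft_sq (a : A) : Equiv.subLeft a ^ 2 = 1 :=
  Equiv.ext (Equiv.subLeft_involutive a)

theorem subLeft_ne_one (hA : ∃ x : A, x + x ≠ 0) (a : A) : Equiv.subLeft a ≠ 1 := by
  intro h
  have hfix (x : A) : a - x = x := Equiv.congr_fun h x
  obtain ⟨x, hx⟩ := hA
  refine hx ?_
  rw [← sub_eq_iff_eq_add.1 (hfix x), ← sub_zero a, hfix 0]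

theorem isSemiregular_subLeft_iff (hA : ∃ x : A, x + x ≠ 0) {a : A} :
    IsSemiregular (Equiv.subLeft a) ↔ ¬Even a := by
  rw [isSemiregular_iff_of_sq_eq_one (subLeft_ne_one hA a) (subLeft_sq a), Even, not_exists]
  simp only [Equiv.subLeft_apply, ne_eq, sub_eq_iff_eq_add]

theorem isConj_subLeft_addLeft_iff [Finite A] (hA : ∃ x : A, x + x ≠ 0) {a b : A} :
    IsConj (Equiv.subLeft a) (Equiv.addLeft b) ↔ ¬Even a ∧ addOrderOf b = 2 := by
  rw [(isSemiregular_addLeft b).isConj_iff, isSemiregular_subLeft_iff hA,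
    orderOf_eq_prime (subLeft_sq a) (subLeft_ne_one hA a), orderOf_addLeft, eq_comm (a := 2)]

end Translation

section Cyclic

variable {A : Type*} [Fintype A]

theorem sum_addOrderOf [AddGroup A] [IsAddCyclic A] {M : Type*} [AddCommMonoid M] (F : ℕ → M) :
    ∑ a : A, F (addOrderOf a) = ∑ e ∈ (Fintype.card A).divisors, φ e • F e := by
  have hmaps : ∀ a ∈ (Finset.univ : Finset A), addOrderOf a ∈ (Fintype.card A).divisors :=
    fun a _ => Nat.mem_divisors.2 ⟨addOrderOf_dvd_card, Fintype.card_ne_zero⟩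
  rw [← Finset.sum_fiberwise_of_maps_to' hmaps]
  refine Finset.sum_congr rfl fun e he => ?_
  rw [Finset.sum_const, IsAddCyclic.card_addOrderOf_eq_totient (Nat.dvd_of_mem_divisors he)]

theorem card_filter_not_even [AddCommGroup A] [IsAddCyclic A] [DecidablePred (Even : A → Prop)]
    (h : Even (Fintype.card A)) :
    Finset.card {a : A | ¬Even a} = Fintype.card A / 2 := by
  have hcard : Nat.card A = Fintype.card A := Nat.card_eq_fintype_card
  have heven : Finset.card {a : A | Even a} = Fintype.card A / 2 := by
    have hrange := IsAddCyclic.card_nsmulAddMonoidHom_range A 2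
    rw [hcard, Nat.gcd_eq_right h.two_dvd] at hrange
    rw [← hrange]
    refine (Nat.subtype_card _ fun a => ?_).symm
    simp [even_iff_exists_two_nsmul, eq_comm]
  have hsplit := Finset.card_filter_add_card_filter_not (s := Finset.univ) (Even : A → Prop)
  rw [heven, Finset.card_univ] at hsplit
  have := Nat.two_mul_div_two_of_even h
  lia

theorem exists_add_self_ne_zero [AddGroup A] [IsAddCyclic A] (hA : 2 < Fintype.card A) :
    ∃ x : A, x + x ≠ 0 := by
  obtain ⟨g, hg⟩ := IsAddCyclic.exists_ofOrder_eq_natCard (α := A)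
  refine ⟨g, fun h => ?_⟩
  rw [← two_nsmul, ← addOrderOf_dvd_iff_nsmul_eq_zero, hg, Nat.card_eq_fintype_card] at h
  exact hA.not_ge (Nat.le_of_dvd two_pos h)

variable [AddCommGroup A] [IsAddCyclic A]

theorem sum_nat_card_semiconjBy_addLeft_addLeft :
    ∑ k : A, ∑ i : A,
        Nat.card {s : Equiv.Perm A // SemiconjBy s (Equiv.addLeft i) (Equiv.addLeft k)} =
      ∑ d ∈ (Fintype.card A).divisors,
        φ (Fintype.card A / d) ^ 2 * (Fintype.card A / d) ^ d * d ! := by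
  classical
  set n := Fintype.card A
  have hinner (k : A) :
      ∑ i : A, Nat.card {s : Equiv.Perm A // SemiconjBy s (Equiv.addLeft i) (Equiv.addLeft k)} =
      φ (addOrderOf k) * (addOrderOf k ^ (n / addOrderOf k) * (n / addOrderOf k)!) := by
    simp_rw [nat_card_semiconjBy, isConj_addLeft_iff, nat_card_centralizer_addLeft]
    rw [← Finset.sum_filter, Finset.sum_const,
      IsAddCyclic.card_addOrderOf_eq_totient addOrderOf_dvd_card, smul_eq_mul]
  simp_rw [hinner]
  rw [sum_addOrderOf (A := A) fun e => φ e * (e ^ (n / e) * (n / e)!), ← Nat.sum_div_divisors]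
  refine Finset.sum_congr rfl fun d hd => ?_
  rw [Nat.div_div_self (Nat.dvd_of_mem_divisors hd) Fintype.card_ne_zero]
  simp only [smul_eq_mul]
  ring

theorem sum_nat_card_semiconjBy_subLeft_addLeft (hA : 2 < Fintype.card A) :
    ∑ k : A, ∑ i : A,
        Nat.card {s : Equiv.Perm A // SemiconjBy s (Equiv.subLeft i) (Equiv.addLeft k)} =
      if Even (Fintype.card A) then Fintype.card A / 2 * (Fintype.card A)‼ else 0 := by
  classical
  set n := Fintype.card A
  have hinner (k : A) :
      ∑ i : A, Nat.card {s : Equiv.Perm A // SemiconjBy s (Equiv.subLeft i) (Equiv.addLeft k)} =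
      if addOrderOf k = 2 then
        Finset.card {i : A | ¬Even i} * (2 ^ (n / 2) * (n / 2)!) else 0 := by
    simp_rw [nat_card_semiconjBy, isConj_subLeft_addLeft_iff (exists_add_self_ne_zero hA),
      nat_card_centralizer_addLeft]
    split_ifs with hk
    · simp only [hk, and_true]
      rw [← Finset.sum_filter, Finset.sum_const, smul_eq_mul]
    · simp [hk]
  simp_rw [hinner]
  rw [sum_addOrderOf (A := A) fun e => if e = 2 then _ else 0]
  simp only [smul_ite, smul_zero, Finset.sum_ite_eq', Nat.mem_divisors, even_iff_two_dvd,
    Fintype.card_ne_zero, ne_eq, not_false_eq_true, and_true, totient_two, one_smul]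
  refine if_ctx_congr Iff.rfl (fun hn => ?_) fun _ => rfl
  have hdf : 2 ^ (n / 2) * (n / 2)! = n‼ := by
    rw [← Nat.doubleFactorial_two_mul, Nat.mul_div_cancel' hn]
  rw [hdf, card_filter_not_even (even_iff_two_dvd.2 hn)]

end Cyclic

section Dihedral

variable (n : ℕ)

/-- The action of the dihedral group on the vertices `ZMod n` of a regular polygon. In Mathlib's
convention `sr i * r j = sr (i + j)`, so the reflection `sr i` has to act as `x ↦ -i - x`. -/
def dihedralPermHom : DihedralGroup n →* Equiv.Perm (ZMod n) where
  toFun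
    | .r i => Equiv.addLeft i
    | .sr i => Equiv.subLeft (-i)
  map_one' := Equiv.addLeft_zero
  map_mul' := by
    rintro (a | a) (b | b) <;> ext x <;> simp <;> ring

variable {n}

theorem dihedralPermHom_r (i : ZMod n) : dihedralPermHom n (.r i) = Equiv.addLeft i := rfl

theorem dihedralPermHom_sr (i : ZMod n) : dihedralPermHom n (.sr i) = Equiv.subLeft (-i) := rfl

theorem sum_dihedralPermHom [NeZero n] {M : Type*} [AddCommMonoid M]
    (F : Equiv.Perm (ZMod n) → M) :
    ∑ g, F (dihedralPermHom n g) = ∑ i, F (Equiv.addLeft i) + ∑ i, F (Equiv.subLeft i) := by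
  rw [← DihedralGroup.equivSum.symm.sum_comp, Fintype.sum_sum_type,
    ← Equiv.sum_comp (Equiv.neg (ZMod n)) fun i => F (Equiv.subLeft i)]
  rfl

theorem mem_range_dihedralPermHom {σ : Equiv.Perm (ZMod n)} :
    σ ∈ (dihedralPermHom n).range ↔
      ∃ m δ : ZMod n, (δ = 1 ∨ δ = -1) ∧ ∀ i, σ i = δ * i + m := by
  constructor
  · rintro ⟨m | m, rfl⟩
    · refine ⟨m, 1, .inl rfl, fun i => ?_⟩
      rw [dihedralPermHom_r, Equiv.coe_addLeft, one_mul, add_comm]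
    · refine ⟨-m, -1, .inr rfl, fun i => ?_⟩
      rw [dihedralPermHom_sr, Equiv.subLeft_apply, neg_one_mul, neg_add_eq_sub]
  · rintro ⟨m, δ, rfl | rfl, hσ⟩
    · refine ⟨.r m, Equiv.ext fun i => ?_⟩
      rw [hσ, dihedralPermHom_r, Equiv.coe_addLeft, one_mul, add_comm]
    · refine ⟨.sr (-m), Equiv.ext fun i => ?_⟩
      rw [hσ, dihedralPermHom_sr, Equiv.subLeft_apply, neg_neg, neg_one_mul, neg_add_eq_sub]

theorem setoid_range_dihedralPermHom_iff {x y : Equiv.Perm (ZMod n)} :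
    DoubleCoset.setoid ((translationHom (ZMod n)).range : Set (Equiv.Perm (ZMod n)))
        (dihedralPermHom n).range x y ↔
      ∃ m k δ : ZMod n, (δ = 1 ∨ δ = -1) ∧ ∀ i, y i = x (δ * i + m) + k := by
  rw [DoubleCoset.rel_iff]
  constructor
  · rintro ⟨_, ⟨k, rfl⟩, σ, hmem, rfl⟩
    obtain ⟨m, δ, hδ, hσ⟩ := mem_range_dihedralPermHom.1 hmem
    exact ⟨m, k.toAdd, δ, hδ, fun i => hσ i ▸ add_comm _ _⟩
  · rintro ⟨m, k, δ, hδ, hxy⟩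
    have hσ (i : ZMod n) : (x⁻¹ * (translationHom _ (.ofAdd k))⁻¹ * y) i = δ * i + m := by
      rw [Equiv.Perm.mul_apply, Equiv.Perm.mul_apply, Equiv.Perm.inv_eq_iff_eq,
        Equiv.Perm.inv_eq_iff_eq, hxy]
      exact add_comm _ _
    exact ⟨_, ⟨.ofAdd k, rfl⟩, _, mem_range_dihedralPermHom.2 ⟨m, δ, hδ, hσ⟩, by group⟩

theorem nat_card_doubleCoset_translationHom_dihedralPermHom [NeZero n] (hn : 2 < n) :
    Nat.card (DoubleCoset.Quotient
        ((translationHom (ZMod n)).range : Set (Equiv.Perm (ZMod n)))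
        (dihedralPermHom n).range) * (2 * n ^ 2) =
      ∑ d ∈ n.divisors, φ (n / d) ^ 2 * (n / d) ^ d * d ! +
        if Even n then n / 2 * n‼ else 0 := by
  have hrot := sum_nat_card_semiconjBy_addLeft_addLeft (A := ZMod n)
  have hrefl := sum_nat_card_semiconjBy_subLeft_addLeft (A := ZMod n) (by rwa [ZMod.card])
  rw [ZMod.card] at hrot hrefl
  have hmul := nat_card_doubleCoset_mul (translationHom (ZMod n)) (dihedralPermHom n)
  rw [Fintype.card_multiplicative, DihedralGroup.card, ZMod.card] at hmul
  rw [show 2 * n ^ 2 = n * (2 * n) by ring, hmul, ← hrot, ← hrefl, ← Finset.sum_add_distrib,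
    ← Multiplicative.ofAdd.sum_comp]
  simp only [translationHom_ofAdd]
  exact Finset.sum_congr rfl fun k _ => sum_dihedralPermHom fun τ =>
    Nat.card {s // SemiconjBy s τ (Equiv.addLeft k)}

theorem nat_card_quot_eq_nat_card_doubleCoset (n : ℕ) :
    Nat.card (Quot fun x y : {x : ZMod n → ZMod n // Function.Bijective x} =>
        ∃ m k δ : ZMod n, (δ = 1 ∨ δ = -1) ∧ ∀ i, y.1 i = x.1 (δ * i + m) + k) =
      Nat.card (DoubleCoset.Quotient
        ((translationHom (ZMod n)).range : Set (Equiv.Perm (ZMod n))) (dihedralPermHom n).range) :=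
  Nat.card_congr <| Quot.congr Equiv.bijectiveEquiv fun x y =>
    (setoid_range_dihedralPermHom_iff (x := .ofBijective _ x.2) (y := .ofBijective _ y.2)).symm

end Dihedral

/-- Theorem 4 (cycles up to rotation only): the number of equivalence classes of
bijections `x : ZMod n → ZMod n` under the relation identifying `x` and `y` when
`y i = x (δ * i + m) + k` for some `m, k : ZMod n` and sign `δ = ±1`, equals
`(1/(2n²)) * (Σ_{d ∣ n} φ(n/d)² (n/d)^d d! + (if n even then (n/2)·n!! else 0))`. -/
theorem cycles_equivalence_classes (n : ℕ) (hn : 3 ≤ n) :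
    (Nat.card (Quot (fun x y : {x : ZMod n → ZMod n // Function.Bijective x} =>
        ∃ (m k δ : ZMod n), (δ = 1 ∨ δ = -1) ∧
          ∀ i : ZMod n, y.1 i = x.1 (δ * i + m) + k)) : ℚ) =
      (1 / (2 * (n : ℚ) ^ 2)) *
        ((∑ d ∈ n.divisors, (Nat.totient (n / d)) ^ 2 * (n / d) ^ d * d ! : ℕ) +
          if Even n then ((n / 2) * Nat.doubleFactorial n : ℕ) else 0) := by
  have : NeZero n := ⟨by lia⟩
  have hcard := nat_card_doubleCoset_translationHom_dihedralPermHom hn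
  rw [nat_card_quot_eq_nat_card_doubleCoset, one_div, eq_inv_mul_iff_mul_eq₀ (by positivity),
    mul_comm]
  exact_mod_cast hcard
end

section
/- Let p > 2 be a prime. Define the equivalence relation ≈_E on the set Y_p of bijections x : ZMod p → ZMod p by x ≈_E y if and only if there exist m, k : ZMod p and a sign δ ∈ {1, -1} ⊆ ZMod p such that for all i : ZMod p, y i = x (δ * i + m) + k. Then the number of equivalence classes of Y_p under ≈_E equals (1/(2p)) * ( (p-1)² + (p-1)! ). -/
open Nat

/-!
The relation `y i = x (δ * i + m) + k` says that `x` and `y` lie in the same double coset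
`T x D` of the symmetric group on `ZMod p`, where `T` consists of the translations and `D` of the
dihedral permutations. By Burnside's lemma, `2 p ^ 2` times the number of double cosets is the sum
over `(t, d) ∈ T × D` of the number of permutations conjugating `d` to `t`. For `t = d = 1` this
number is `p!`. If `t` and `d` are both nontrivial translations, they are `p`-cycles, hence
conjugate with centralizers of order `p`; this happens for `(p - 1) ^ 2` pairs. In all other cases
`t` and `d` are not conjugate, since a reflection fixes a point but is not the identity.
-/

open Equiv Multiplicative

section Group

variable {G H K : Type*} [Group G] [Group H] [Group K]

/-- The action of `H × K` on `G` by left multiplication through `f` and inverse right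
multiplication through `g`. Its orbits are the double cosets of the ranges of `f` and `g`. -/
abbrev twoSidedAction (f : H →* G) (g : K →* G) : MulAction (H × K) G where
  smul u x := f u.1 * x * (g u.2)⁻¹
  one_smul x := show f 1 * x * (g 1)⁻¹ = x by simp
  mul_smul u v x :=
    show f (u.1 * v.1) * x * (g (u.2 * v.2))⁻¹ = f u.1 * (f v.1 * x * (g v.2)⁻¹) * (g u.2)⁻¹ by
      simp [mul_assoc]

theorem orbitRel_twoSidedAction (f : H →* G) (g : K →* G) :
    letI := twoSidedAction f g
    MulAction.orbitRel (H × K) G = DoubleCoset.setoid (f.range : Set G) g.range := by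
  let := twoSidedAction f g
  ext x y
  rw [Setoid.comm' (DoubleCoset.setoid _ _), DoubleCoset.rel_iff, MulAction.orbitRel_apply,
    MulAction.mem_orbit_iff]
  constructor
  · rintro ⟨⟨h, k⟩, rfl⟩
    exact ⟨f h, ⟨h, rfl⟩, (g k)⁻¹, inv_mem ⟨k, rfl⟩, rfl⟩
  · rintro ⟨_, ⟨h, rfl⟩, _, ⟨k, rfl⟩, rfl⟩
    exact ⟨(h, k⁻¹), show f h * y * (g k⁻¹)⁻¹ = _ by rw [map_inv, inv_inv]⟩

theorem sum_card_semiconjBy_eq_card_doubleCosets_mul [Finite G] [Fintype H] [Fintype K]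
    (f : H →* G) (g : K →* G) :
    ∑ h, ∑ k, Nat.card {x // SemiconjBy x (g k) (f h)} =
      Nat.card (DoubleCoset.Quotient (f.range : Set G) g.range) * (Nat.card H * Nat.card K) := by
  let := twoSidedAction f g
  have fixedBy_eq (h : H) (k : K) :
      MulAction.fixedBy G (h, k) = {x | SemiconjBy x (g k) (f h)} := by
    ext x
    exact mul_inv_eq_iff_eq_mul.trans eq_comm
  calc
    _ = ∑ u : H × K, Nat.card (MulAction.fixedBy G u) := by
      simp only [Fintype.sum_prod_type, fixedBy_eq, Set.coe_ofPred]
    _ = Nat.card (MulAction.orbitRel.Quotient (H × K) G × (H × K)) := by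
      rw [← Nat.card_sigma, Nat.card_congr (MulAction.sigmaFixedByEquivOrbitsProdGroup (H × K) G)]
    _ = _ := by
      rw [Nat.card_prod, Nat.card_prod, MulAction.orbitRel.Quotient, orbitRel_twoSidedAction]
      rfl

theorem card_semiconjBy_eq_zero {a b : G} (h : ¬IsConj a b) :
    Nat.card {x // SemiconjBy x a b} = 0 := by
  have : IsEmpty {x // SemiconjBy x a b} := ⟨fun x => h ⟨toUnits x.1, x.2⟩⟩
  exact Nat.card_of_isEmpty

theorem card_semiconjBy_eq_card_centralizer {a b : G} (h : IsConj a b) :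
    Nat.card {x // SemiconjBy x a b} = Nat.card (Subgroup.centralizer {a}) := by
  obtain ⟨c, rfl⟩ := isConj_iff.mp h
  refine Nat.card_congr ((Equiv.mulLeft c⁻¹).subtypeEquiv fun x => ?_)
  simp only [SemiconjBy, Subgroup.mem_centralizer_singleton_iff, Equiv.coe_mulLeft, mul_assoc,
    inv_mul_eq_iff_eq_mul]

end Group

section Translation

variable {A : Type*} [AddGroup A]

/-- The translations `x ↦ a + x` of an additive group, as a homomorphism into its group of
permutations. -/
def translation : Multiplicative A →* Perm A :=
  MulAction.toPermHom (Multiplicative A) A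

@[simp]
theorem translation_apply (a : Multiplicative A) (i : A) : translation a i = a.toAdd + i :=
  rfl

theorem translation_injective : Function.Injective (translation (A := A)) :=
  fun _ _ h => toAdd.injective (add_right_cancel (b := (0 : A)) (Equiv.congr_fun h 0))

theorem cycleType_translation [Fintype A] [DecidableEq A] (hA : (Fintype.card A).Prime)
    {a : Multiplicative A} (ha : a ≠ 1) : (translation a).cycleType = {Fintype.card A} := by
  have horder : orderOf (translation a) = Fintype.card A := by
    rw [orderOf_injective (translation (A := A)) translation_injective]
    have hdvd : orderOf a ∣ Fintype.card A := Fintype.card_multiplicative A ▸ orderOf_dvd_card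
    exact (hA.eq_one_or_self_of_dvd _ hdvd).resolve_left (mt orderOf_eq_one_iff.mp ha)
  have hcycle := Perm.isCycle_of_prime_order'' hA horder
  rw [hcycle.cycleType, ← hcycle.orderOf, horder]

end Translation

theorem card_centralizer_of_cycleType_eq_singleton_card {α : Type*} [Fintype α] [DecidableEq α]
    {σ : Perm α} (hσ : σ.cycleType = {Fintype.card α}) :
    Nat.card (Subgroup.centralizer {σ}) = Fintype.card α := by
  simp [Perm.nat_card_centralizer, hσ]

theorem card_semiconjBy_translation {A : Type*} [AddGroup A] [Fintype A] [DecidableEq A]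
    (hA : (Fintype.card A).Prime) (a b : Multiplicative A) :
    Nat.card {x // SemiconjBy x (translation b) (translation a)} =
      if a = 1 then if b = 1 then (Fintype.card A)! else 0
      else if b = 1 then 0 else Fintype.card A := by
  have translation_eq_one {c : Multiplicative A} : translation c = 1 ↔ c = 1 :=
    map_eq_one_iff _ translation_injective
  split_ifs with ha hb hb
  · simp [ha, hb, Fintype.card_perm]
  · rw [ha, map_one]
    exact card_semiconjBy_eq_zero (by rwa [isConj_one_left, translation_eq_one])
  · rw [hb, map_one]
    exact card_semiconjBy_eq_zero (by rwa [isConj_one_right, translation_eq_one])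
  · have hcycle := cycleType_translation hA hb
    rw [card_semiconjBy_eq_card_centralizer
      (Perm.isConj_of_cycleType_eq (hcycle.trans (cycleType_translation hA ha).symm)),
      card_centralizer_of_cycleType_eq_singleton_card hcycle]

section Dihedral

variable {n : ℕ}

/-- The dihedral group acting on the vertices `ZMod n` of the regular `n`-gon: `r a` is the rotation
`i ↦ a + i` and `sr a`, this rotation followed by negation, is the reflection `i ↦ -(a + i)`. -/
def dihedralPerm : DihedralGroup n →* Perm (ZMod n) where
  toFun
    | .r a => translation (ofAdd a)
    | .sr a => (translation (ofAdd a)).trans (Equiv.neg _)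
  map_one' := map_one translation
  map_mul' := by
    rintro (a | a) (b | b) <;> ext i <;>
      simp only [DihedralGroup.r_mul_r, DihedralGroup.r_mul_sr, DihedralGroup.sr_mul_r,
        DihedralGroup.sr_mul_sr, Perm.mul_apply, trans_apply, Equiv.neg_apply, translation_apply,
        toAdd_ofAdd] <;>
      ring

theorem dihedralPerm_r (a : ZMod n) : dihedralPerm (.r a) = translation (ofAdd a) :=
  rfl

@[simp]
theorem dihedralPerm_sr_apply (a i : ZMod n) : dihedralPerm (.sr a) i = -(a + i) :=
  rfl

theorem mem_range_dihedralPerm {σ : Perm (ZMod n)} :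
    σ ∈ (dihedralPerm (n := n)).range ↔
      ∃ m δ : ZMod n, (δ = 1 ∨ δ = -1) ∧ ∀ i, σ i = δ * i + m := by
  constructor
  · rintro ⟨a | a, rfl⟩
    · exact ⟨a, 1, .inl rfl, fun i => by simp [dihedralPerm_r, add_comm]⟩
    · exact ⟨-a, -1, .inr rfl, fun i => by simp⟩
  · rintro ⟨m, δ, rfl | rfl, hσ⟩
    · exact ⟨.r m, by ext i; simp [dihedralPerm_r, hσ, add_comm]⟩
    · exact ⟨.sr (-m), by ext i; simp [hσ]⟩

variable (n) in
/-- The cycle subgraphs on the vertices `ZMod n` up to rotation of the circle: labellings of the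
cycle by vertices, modulo rotations of the circle (acting on the left) and change of the starting
point or direction in which the cycle is traversed (acting on the right). -/
abbrev RotationClass : Type :=
  DoubleCoset.Quotient ((translation (A := ZMod n)).range : Set (Perm (ZMod n)))
    (dihedralPerm (n := n)).range

theorem translation_dihedralPerm_doubleCoset_rel_iff {x y : Perm (ZMod n)} :
    DoubleCoset.setoid ((translation (A := ZMod n)).range : Set (Perm (ZMod n)))
        (dihedralPerm (n := n)).range x y ↔
      ∃ m k δ : ZMod n, (δ = 1 ∨ δ = -1) ∧ ∀ i, y i = x (δ * i + m) + k := by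
  rw [DoubleCoset.rel_iff]
  constructor
  · rintro ⟨_, ⟨t, rfl⟩, σ, hσ, rfl⟩
    obtain ⟨m, δ, hδ, hσ⟩ := mem_range_dihedralPerm.mp hσ
    exact ⟨m, t.toAdd, δ, hδ, fun i => by simp [hσ, add_comm]⟩
  · rintro ⟨m, k, δ, hδ, h⟩
    refine ⟨translation (ofAdd k), ⟨_, rfl⟩, (translation (ofAdd k) * x)⁻¹ * y,
      mem_range_dihedralPerm.mpr ⟨m, δ, hδ, fun i => ?_⟩, by group⟩
    rw [Perm.mul_apply, Perm.inv_eq_iff_eq, h, add_comm]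
    rfl

variable (n) in
/-- Rotation classes as classes of bijective functions `x` under the substitutions
`x ↦ x (δ * · + m) + k`. -/
noncomputable def quotBijectiveEquivRotationClass :
    Quot (fun x y : {x : ZMod n → ZMod n // Function.Bijective x} =>
      ∃ m k δ : ZMod n, (δ = 1 ∨ δ = -1) ∧ ∀ i, y.1 i = x.1 (δ * i + m) + k) ≃
        RotationClass n :=
  Quot.congr bijectiveEquiv fun x y =>
    (translation_dihedralPerm_doubleCoset_rel_iff (x := bijectiveEquiv x)
      (y := bijectiveEquiv y)).symm

theorem not_isConj_dihedralPerm_sr_translation (hn : Odd n) (hn1 : n ≠ 1) (a : ZMod n)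
    (b : Multiplicative (ZMod n)) : ¬IsConj (dihedralPerm (.sr a)) (translation b) := by
  rw [isConj_iff]
  rintro ⟨x, hx⟩
  have : Nontrivial (ZMod n) := ZMod.nontrivial_iff.mpr hn1
  have two_isUnit : IsUnit (2 : ZMod n) := by
    exact_mod_cast (ZMod.isUnit_iff_coprime 2 n).mpr hn.coprime_two_left
  obtain ⟨i, hi⟩ : ∃ i : ZMod n, 2 * i = -a := two_isUnit.dvd.imp fun _ => Eq.symm
  have fixed : dihedralPerm (.sr a) i = i := by
    rw [dihedralPerm_sr_apply]
    linear_combination -hi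
  have translation_eq_one : translation b = 1 := by
    have : translation b (x i) = x i := by simp [← hx, -translation_apply, fixed]
    rw [toAdd_eq_zero.mp (add_eq_right.mp this), map_one]
  have sr_eq_one : dihedralPerm (.sr a) = 1 := by
    rwa [translation_eq_one, mul_inv_eq_one, mul_eq_left (a := x)] at hx
  have fixed_succ : -(a + (i + 1)) = i + 1 := Equiv.congr_fun sr_eq_one (i + 1)
  exact two_isUnit.ne_zero (by linear_combination -hi - fixed_succ)

theorem sum_card_semiconjBy_translation_dihedralPerm {p : ℕ} [Fact p.Prime] (hp : Odd p) :
    ∑ t : Multiplicative (ZMod p), ∑ d : DihedralGroup p,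
      Nat.card {x // SemiconjBy x (dihedralPerm d) (translation t)} =
        p ! + (p - 1) * ((p - 1) * p) := by
  have hcard : (Fintype.card (ZMod p)).Prime := by
    rw [ZMod.card]
    exact Fact.out
  have sum_dihedral (t : Multiplicative (ZMod p)) :
      ∑ d : DihedralGroup p, Nat.card {x // SemiconjBy x (dihedralPerm d) (translation t)} =
        ∑ a, Nat.card {x // SemiconjBy x (translation a) (translation t)} := by
    rw [← DihedralGroup.equivSum.symm.sum_comp, Fintype.sum_sum_type, ← ofAdd.sum_comp]
    simp [dihedralPerm_r, card_semiconjBy_eq_zero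
      (not_isConj_dihedralPerm_sr_translation hp (Fact.out : p.Prime).ne_one _ t)]
  simp only [sum_dihedral, card_semiconjBy_translation hcard, ZMod.card]
  simp [Finset.sum_ite, Finset.filter_eq', Finset.filter_ne', Finset.card_erase_of_mem]

theorem card_rotationClass_mul_two_mul {p : ℕ} (hp : p.Prime) (hp2 : p ≠ 2) :
    Nat.card (RotationClass p) * (2 * p) = (p - 1) ^ 2 + (p - 1)! := by
  have : Fact p.Prime := ⟨hp⟩
  have burnside := sum_card_semiconjBy_eq_card_doubleCosets_mul
    (translation (A := ZMod p)) (dihedralPerm (n := p))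
  rw [sum_card_semiconjBy_translation_dihedralPerm (hp.odd_of_ne_two hp2),
    ← Nat.mul_factorial_pred hp.ne_zero, Nat.card_congr toAdd, Nat.card_zmod,
    DihedralGroup.nat_card] at burnside
  refine Nat.eq_of_mul_eq_mul_left hp.pos ?_
  linear_combination -burnside

end Dihedral

/-- Corollary (cycles in `K_p` up to rotation only, `p > 2` prime):
the number of equivalence classes equals `(1/(2p)) * ((p-1)² + (p-1)!)`. -/
theorem cycles_equivalence_classes_prime (p : ℕ) (hp : p.Prime) (hp2 : 2 < p) :
    (Nat.card (Quot (fun x y : {x : ZMod p → ZMod p // Function.Bijective x} =>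
        ∃ (m k δ : ZMod p), (δ = 1 ∨ δ = -1) ∧
          ∀ i : ZMod p, y.1 i = x.1 (δ * i + m) + k)) : ℚ) =
      (1 / (2 * (p : ℚ))) * (((p - 1) ^ 2 + (p - 1)! : ℕ)) := by
  have hp0 : (p : ℚ) ≠ 0 := Nat.cast_ne_zero.mpr hp.ne_zero
  rw [Nat.card_congr (quotBijectiveEquivRotationClass p),
    ← card_rotationClass_mul_two_mul hp hp2.ne']
  push_cast
  field_simp
end

section
/- Let n ≥ 3 be an integer. Then Σ_{k : ZMod n} #{ x : Fin n → ZMod n bijective | ∀ i : Fin n, x i = x (n - 1 - i) + k } equals n!! if n is even and 0 if n is odd. Moreover, the only value of k contributing a nonzero count is k = n/2 (for n even). -/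
open Nat

/-! A string `x` with `x i = x (σ i) + k` is a bijection intertwining the involution `σ` of
positions with the translation by `k` of labels. Since `σ` is not the identity, `k` must have
order two, so the translation is an involution without fixed points, and then so is `σ`. Two
fixed-point-free involutions of sets of the same size are conjugate, hence the intertwining
bijections form a torsor under the centralizer of such an involution, whose order is
`2 ^ m * m ! = n‼` with `n = 2 * m`. In `ZMod n` the only possible element of order two is
`n / 2`. -/

open Equiv Function

section FixedPointFreeInvolution

variable {α β : Type*} {σ : Perm α} {τ : Perm β}

theorem cycleType_of_involutive [Fintype α] [DecidableEq α] (hσ : Involutive σ) :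
    σ.cycleType = Multiset.replicate σ.cycleType.card 2 :=
  Perm.cycleType_of_pow_prime_eq_one <| by ext a; simp [pow_two, hσ a]

theorem card_eq_two_mul_card_cycleType_of_involutive [Fintype α] [DecidableEq α] (hσ : Involutive σ)
    (hfix : ∀ a, σ a ≠ a) : Fintype.card α = 2 * σ.cycleType.card := by
  have hsupp : σ.support = Finset.univ := by ext a; simp [hfix]
  rw [← Finset.card_univ, ← hsupp, ← σ.sum_cycleType, cycleType_of_involutive hσ]
  simp [mul_comm]

theorem nat_card_centralizer_of_involutive [Fintype α] (hσ : Involutive σ)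
    (hfix : ∀ a, σ a ≠ a) : Nat.card (Subgroup.centralizer {σ}) = (Fintype.card α)‼ := by
  classical
  have hcard := card_eq_two_mul_card_cycleType_of_involutive hσ hfix
  rw [Perm.nat_card_centralizer, cycleType_of_involutive hσ, hcard, doubleFactorial_two_mul]
  obtain hm | hm := eq_or_ne σ.cycleType.card 0 <;>
    simp [Multiset.toFinset_replicate, hm, mul_comm]

theorem exists_equiv_semiconj_of_involutive [Fintype α] [Fintype β]
    (hcard : Fintype.card α = Fintype.card β) (hσ : Involutive σ) (hσfix : ∀ a, σ a ≠ a)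
    (hτ : Involutive τ) (hτfix : ∀ b, τ b ≠ b) : ∃ e : α ≃ β, Semiconj e σ τ := by
  classical
  let e := Fintype.equivOfCardEq hcard
  let τ' : Perm α := e.symm.permCongr τ
  have hτ' : Involutive τ' := fun a => by simp [τ', hτ (e a)]
  have hτ'fix (a : α) : τ' a ≠ a := by simpa [τ', symm_apply_eq] using hτfix (e a)
  have hcycles : σ.cycleType.card = τ'.cycleType.card := by
    have := card_eq_two_mul_card_cycleType_of_involutive hσ hσfix
    have := card_eq_two_mul_card_cycleType_of_involutive hτ' hτ'fix
    omega
  have hconj : IsConj σ τ' := Perm.isConj_of_cycleType_eq <| by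
    rw [cycleType_of_involutive hσ, cycleType_of_involutive hτ', hcycles]
  obtain ⟨c, hc⟩ := isConj_iff.1 hconj
  refine ⟨c.trans e, fun a => ?_⟩
  have hca : c (σ a) = τ' (c a) := by simp [← hc]
  simp [hca, τ']

theorem nat_card_equiv_semiconj_eq_nat_card_centralizer {f : α ≃ β} (hf : Semiconj f σ τ) :
    Nat.card {e : α ≃ β // Semiconj e σ τ} = Nat.card (Subgroup.centralizer {σ}) := by
  refine Nat.card_congr <| (equivCongr (Equiv.refl α) f.symm).subtypeEquiv fun e => ?_
  rw [Subgroup.mem_centralizer_singleton_iff, Equiv.ext_iff]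
  refine forall_congr' fun a => ?_
  simp [symm_apply_eq, hf.eq]

theorem nat_card_equiv_semiconj_of_involutive [Fintype α] [Fintype β]
    (hcard : Fintype.card α = Fintype.card β) (hσ : Involutive σ) (hσfix : ∀ a, σ a ≠ a)
    (hτ : Involutive τ) (hτfix : ∀ b, τ b ≠ b) :
    Nat.card {e : α ≃ β // Semiconj e σ τ} = (Fintype.card α)‼ := by
  obtain ⟨f, hf⟩ := exists_equiv_semiconj_of_involutive hcard hσ hσfix hτ hτfix
  rw [nat_card_equiv_semiconj_eq_nat_card_centralizer hf,
    nat_card_centralizer_of_involutive hσ hσfix]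

end FixedPointFreeInvolution

section Translation

variable {α G : Type*} [AddGroup G] {σ : α → α} {k : G} {x : α → G}

theorem addOrderOf_eq_two_iff_add_self : addOrderOf k = 2 ↔ k + k = 0 ∧ k ≠ 0 := by
  rw [addOrderOf_eq_prime_iff, two_nsmul]

theorem apply_ne_self_of_eq_add (hk : k ≠ 0) (h : ∀ i, x i = x (σ i) + k) (i : α) :
    σ i ≠ i := by
  intro hi
  have hxi : x i = x i + k := by simpa only [hi] using h i
  exact hk (left_eq_add.1 hxi)

theorem addOrderOf_eq_two_of_eq_add (hσ : Involutive σ) (hne : σ ≠ id) (hx : Injective x)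
    (h : ∀ i, x i = x (σ i) + k) : addOrderOf k = 2 := by
  obtain ⟨i, hi⟩ : ∃ i, σ i ≠ i := ne_iff.1 hne
  refine addOrderOf_eq_two_iff_add_self.2 ⟨?_, ?_⟩
  · have : x i = x i + (k + k) := calc
      x i = x (σ i) + k := h i
      _ = x (σ (σ i)) + k + k := by rw [← h (σ i)]
      _ = x i + (k + k) := by rw [hσ i, add_assoc]
    exact left_eq_add.1 this
  · rintro rfl
    exact hi (hx <| by rw [h i, add_zero]).symm

theorem nat_card_bijective_eq_add [Fintype α] [Fintype G]
    (hcard : Fintype.card α = Fintype.card G) (hσ : Involutive σ) (hfix : ∀ i, σ i ≠ i)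
    (hk : addOrderOf k = 2) :
    Nat.card {x : α → G // Bijective x ∧ ∀ i, x i = x (σ i) + k} = (Fintype.card α)‼ := by
  obtain ⟨hkk, hk0⟩ := addOrderOf_eq_two_iff_add_self.1 hk
  have hτ : Involutive (Equiv.addRight k) := fun g => by simp [add_assoc, hkk]
  have hτfix (g : G) : Equiv.addRight k g ≠ g := by simpa using hk0
  rw [← nat_card_equiv_semiconj_of_involutive (σ := hσ.toPerm) hcard hσ hfix hτ hτfix]
  refine Nat.card_congr <| (subtypeSubtypeEquivSubtypeInter _ _).symm.trans <|
    bijectiveEquiv.subtypeEquiv fun x => forall_congr' fun i => ?_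
  exact eq_comm.trans (hτ.eq_iff (x := x.1 (σ i)) (y := x.1 i))

theorem fixed_strings_v_rk_general [Fintype α] [DecidableEq α] [Fintype G]
    (hcard : Fintype.card α = Fintype.card G) (hσ : Involutive σ) (hne : σ ≠ id) :
    (∑ k : G, Nat.card {x : α → G // Bijective x ∧ ∀ i, x i = x (σ i) + k} =
      if ∀ i, σ i ≠ i then Finset.card {k : G | addOrderOf k = 2} * (Fintype.card α)‼ else 0) ∧
    ∀ k : G, Nat.card {x : α → G // Bijective x ∧ ∀ i, x i = x (σ i) + k} ≠ 0 →
      addOrderOf k = 2 := by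
  have hsupp (k : G)
      (h : Nat.card {x : α → G // Bijective x ∧ ∀ i, x i = x (σ i) + k} ≠ 0) :
      addOrderOf k = 2 ∧ ∀ i, σ i ≠ i := by
    obtain ⟨x, hx, hxk⟩ := (Nat.card_ne_zero.1 h).1
    have hk := addOrderOf_eq_two_of_eq_add hσ hne hx.injective hxk
    exact ⟨hk, apply_ne_self_of_eq_add (addOrderOf_eq_two_iff_add_self.1 hk).2 hxk⟩
  refine ⟨?_, fun k h => (hsupp k h).1⟩
  split_ifs with hfix
  · rw [← Finset.sum_filter_of_ne fun k _ h => (hsupp k h).1]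
    refine Finset.sum_const_nat fun k hk => ?_
    exact nat_card_bijective_eq_add hcard hσ hfix (Finset.mem_filter.1 hk).2
  · exact Finset.sum_eq_zero fun k _ => by_contra fun h => hfix (hsupp k h).2

end Translation

theorem forall_fin_rev_ne_iff_even {n : ℕ} : (∀ i : Fin n, i.rev ≠ i) ↔ Even n := by
  refine ⟨fun h => ?_, ?_⟩
  · by_contra hn
    obtain ⟨m, rfl⟩ := Nat.not_even_iff_odd.1 hn
    exact h ⟨m, by omega⟩ (by ext; simp only [Fin.val_rev]; omega)
  · rintro ⟨m, rfl⟩ i hi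
    have hval := Fin.val_rev i
    rw [hi] at hval
    omega

theorem zmod_eq_half_of_addOrderOf_eq_two {n : ℕ} [NeZero n] {k : ZMod n} (hk : addOrderOf k = 2) :
    k = ((n / 2 : ℕ) : ZMod n) := by
  obtain ⟨hkk, hk0⟩ := addOrderOf_eq_two_iff_add_self.1 hk
  have hval : 2 * k.val = n :=
    ((ZMod.neg_eq_self_iff k).1 (neg_eq_of_add_eq_zero_left hkk)).resolve_left hk0
  rw [show n / 2 = k.val by omega, ZMod.natCast_zmod_val]

theorem card_zmod_addOrderOf_eq_two {n : ℕ} [NeZero n] (hn : Even n) :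
    Finset.card {k : ZMod n | addOrderOf k = 2} = 1 := by
  rw [IsAddCyclic.card_addOrderOf_eq_totient (by simpa [ZMod.card] using hn.two_dvd), totient_two]

theorem fin_rev_ne_id {n : ℕ} (hn : 2 ≤ n) : (Fin.rev : Fin n → Fin n) ≠ id := by
  intro h
  have hlast : n - (0 + 1) = 0 := congr_arg Fin.val (congr_fun h ⟨0, by omega⟩)
  omega

/-- The total number of strings fixed by the elements `(v, r^k)` (reverse the string
and add `k` to every label) is `n!!` if `n` is even and `0` if `n` is odd; moreover
only `k = n/2` contributes a nonzero count. -/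
theorem fixed_strings_v_rk (n : ℕ) (hn : 3 ≤ n) [NeZero n] :
    (∑ k : ZMod n,
        Nat.card {x : Fin n → ZMod n // Function.Bijective x ∧
          ∀ i : Fin n, x i = x i.rev + k} =
      if Even n then Nat.doubleFactorial n else 0) ∧
    ∀ k : ZMod n,
      Nat.card {x : Fin n → ZMod n // Function.Bijective x ∧
          ∀ i : Fin n, x i = x i.rev + k} ≠ 0 →
        k = ((n / 2 : ℕ) : ZMod n) := by
  have hcard : Fintype.card (Fin n) = Fintype.card (ZMod n) := by simp [ZMod.card]
  obtain ⟨hsum, hsupp⟩ := fixed_strings_v_rk_general hcard Fin.rev_involutive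
    (fin_rev_ne_id (by omega))
  refine ⟨hsum.trans ?_, fun k hk => zmod_eq_half_of_addOrderOf_eq_two (hsupp k hk)⟩
  refine ite_congr (propext forall_fin_rev_ne_iff_even) (fun heven => ?_) fun _ => rfl
  rw [card_zmod_addOrderOf_eq_two heven, one_mul, Fintype.card_fin]
end
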